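/- arXiv:2602.06361 — 3 statements merged into one kernel-verified Lean document; each statement's English description precedes it below -/
import Mathlib

section
/- Let μ^a, μ^b ∈ [0,1]^m with OptEnvy ≤ −Δ for some Δ > 0, let 1 ≤ q ≤ m, let S be a uniformly random subset of {1,…,m} of size q, and set Δ' = (1/2)·(q/m)·Δ. Then for every c > 0: P[ ∑_{i∈S} |c μ^a_i − μ^b_i| ≤ (1+c)Δ' ] ≤ exp(−(1/2)·q²Δ²/m³). -/
open Real
open scoped Classical

noncomputable section

def envyAB {m : ℕ} (μa : Fin m → ℝ) (A : Finset (Fin m)) : ℝ :=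
  ∑ i ∈ Aᶜ, μa i - ∑ i ∈ A, μa i

def envyBA {m : ℕ} (μb : Fin m → ℝ) (A : Finset (Fin m)) : ℝ :=
  ∑ i ∈ A, μb i - ∑ i ∈ Aᶜ, μb i

def envy {m : ℕ} (μa μb : Fin m → ℝ) (A : Finset (Fin m)) : ℝ :=
  max (envyAB μa A) (envyBA μb A)

def optEnvy {m : ℕ} (μa μb : Fin m → ℝ) : ℝ :=
  ⨅ A : Finset (Fin m), envy μa μb A

/-!
By Chernoff's method the lower tail of `∑ i ∈ S, x i` is controlled by the average over all `q`-sets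
`S` of `∏ i ∈ S, exp (t * x i)`, which is a normalized elementary symmetric function. Maclaurin's
inequality bounds this average by the `q`-th power of the mean of `exp (t * x i)`, so sampling
without replacement obeys the Hoeffding bound for independent samples. For
`x i = |c * μa i - μb i|`, an optimal allocation signs the terms so that the mean of `x` is at least
`(1 + c) * Δ / m`, whereas the samples being counted have mean at most half of that.
-/

theorem esymm_cons {R : Type*} [CommSemiring R] (a : R) (s : Multiset R) (k : ℕ) :
    (a ::ₘ s).esymm (k + 1) = s.esymm (k + 1) + a * s.esymm k := by
  simp only [Multiset.esymm, Multiset.powersetCard_cons, Multiset.map_add, Multiset.map_map,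
    Multiset.sum_add, Function.comp_apply, Multiset.prod_cons, Multiset.sum_map_mul_left]

theorem mean_cons {K : Type*} [Field K] [CharZero K] (a : K) (s : Multiset K) :
    (a ::ₘ s).sum / (a ::ₘ s).card =
      s.sum / s.card + (a - s.sum / s.card) / (s.card + 1) := by
  have card_mul_mean : s.card * (s.sum / s.card) = s.sum :=
    mul_div_cancel_of_imp' fun h => by
      rw [Multiset.card_eq_zero.1 (Nat.cast_eq_zero.1 h), Multiset.sum_zero]
  have hcard : (s.card + 1 : K) ≠ 0 := s.card.cast_add_one_ne_zero
  rw [Multiset.sum_cons, Multiset.card_cons, Nat.cast_add_one, div_eq_iff hcard, add_mul,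
    div_mul_cancel₀ _ hcard]
  linear_combination -card_mul_mean

theorem choose_succ_mul_add_choose_mul {K : Type*} [Field K] [CharZero K] (n k : ℕ) (x y : K) :
    n.choose (k + 1) * x + n.choose k * y =
      (n + 1).choose (k + 1) * (x + (k + 1) * ((y - x) / (n + 1))) := by
  have hn : (n + 1 : K) ≠ 0 := n.cast_add_one_ne_zero
  have pascal : ((n + 1).choose (k + 1) : K) = n.choose k + n.choose (k + 1) := by
    exact_mod_cast Nat.choose_succ_succ n k
  have absorb : ((n + 1) * n.choose k : K) = (n + 1).choose (k + 1) * (k + 1) := by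
    exact_mod_cast Nat.add_one_mul_choose_eq n k
  field_simp
  linear_combination (y - x) * absorb - (n + 1) * x * pascal

/- Adjoining `a` to `s` moves the mean from `μ` to `μ + d`, and the induction step reduces to
Bernoulli's inequality `μ ^ (k + 1) + (k + 1) * μ ^ k * d ≤ (μ + d) ^ (k + 1)`. -/
theorem esymm_le_choose_mul_mean_pow {K : Type*} [Field K] [LinearOrder K] [IsStrictOrderedRing K]
    {s : Multiset K} (hs : ∀ y ∈ s, 0 ≤ y) (k : ℕ) :
    s.esymm k ≤ s.card.choose k * (s.sum / s.card) ^ k := by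
  induction s using Multiset.induction_on generalizing k with
  | empty => cases k <;> simp [Multiset.esymm, Multiset.powersetCard_zero_right]
  | cons a s ih =>
    cases k with
    | zero => simp [Multiset.esymm]
    | succ k =>
      obtain ⟨ha, hs'⟩ := Multiset.forall_mem_cons.1 hs
      set n := s.card
      set μ := s.sum / n
      set d := (a - μ) / (n + 1)
      have mean_nonneg : 0 ≤ μ := div_nonneg (Multiset.sum_nonneg hs') n.cast_nonneg
      have new_mean_nonneg : 0 ≤ μ + d :=
        mean_cons a s ▸ div_nonneg (Multiset.sum_nonneg hs) (Nat.cast_nonneg _)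
      have bernoulli : μ ^ (k + 1) + (k + 1) * μ ^ k * d ≤ (μ + d) ^ (k + 1) := by
        simpa only [Nat.cast_add_one, Nat.add_sub_cancel] using
          pow_add_mul_le_add_pow mean_nonneg (by linarith : 0 ≤ 2 * μ + d) (k + 1)
      calc (a ::ₘ s).esymm (k + 1)
          = s.esymm (k + 1) + a * s.esymm k := esymm_cons a s k
        _ ≤ n.choose (k + 1) * μ ^ (k + 1) + a * (n.choose k * μ ^ k) := by
            gcongr
            exacts [ih hs' _, ih hs' _]
        _ = (n.choose (k + 1) * μ + n.choose k * a) * μ ^ k := by ring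
        _ = (n + 1).choose (k + 1) * (μ ^ (k + 1) + (k + 1) * μ ^ k * d) := by
            rw [choose_succ_mul_add_choose_mul]
            ring
        _ ≤ (n + 1).choose (k + 1) * (μ + d) ^ (k + 1) := by gcongr
        _ = _ := by rw [mean_cons, Multiset.card_cons]

section Hoeffding

variable {ι : Type*} {s : Finset ι} {x : ι → ℝ} {a b : ℝ}

theorem mean_exp_le_of_mem_Icc (hx : ∀ i ∈ s, x i ∈ Set.Icc a b) (t : ℝ) :
    (∑ i ∈ s, exp (t * x i)) / s.card ≤
      exp (t * ((∑ i ∈ s, x i) / s.card) + (b - a) ^ 2 * t ^ 2 / 8) := by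
  rcases s.eq_empty_or_nonempty with rfl | hs
  · simp [exp_nonneg]
  have : Nonempty s := hs.to_subtype
  let _ : MeasurableSpace s := ⊤
  set P := (PMF.uniformOfFintype s).toMeasure
  have integral_eq_mean (f : ι → ℝ) : ∫ i : s, f i ∂P = (∑ i ∈ s, f i) / s.card := by
    simp only [P, PMF.integral_eq_sum, PMF.uniformOfFintype_apply, Fintype.card_coe, smul_eq_mul,
      ENNReal.toReal_inv, ENNReal.toReal_natCast, inv_mul_eq_div, ← Finset.sum_div,
      s.sum_coe_sort f]
  have centered := (ProbabilityTheory.hasSubgaussianMGF_of_mem_Icc (μ := P) (X := fun i : s => x i)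
    (measurable_of_finite _).aemeasurable (Filter.Eventually.of_forall fun i => hx i i.2)).mgf_le t
  rw [integral_eq_mean, ProbabilityTheory.mgf,
    integral_eq_mean fun i => exp (t * (x i - (∑ i ∈ s, x i) / s.card))] at centered
  simp only [mul_sub, exp_sub, ← Finset.sum_div] at centered
  rw [div_right_comm, div_le_iff₀' (exp_pos _), ← exp_add] at centered
  refine centered.trans_eq ?_
  congr 2
  simp only [div_pow, NNReal.coe_div, NNReal.coe_pow, coe_nnnorm, norm_eq_abs, sq_abs,
    NNReal.coe_ofNat]
  ring

theorem sum_powersetCard_exp_le (hx : ∀ i ∈ s, x i ∈ Set.Icc a b) (q : ℕ) (t : ℝ) :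
    ∑ S ∈ s.powersetCard q, exp (t * ∑ i ∈ S, x i) ≤
      s.card.choose q *
        exp (q * (t * ((∑ i ∈ s, x i) / s.card) + (b - a) ^ 2 * t ^ 2 / 8)) := by
  calc ∑ S ∈ s.powersetCard q, exp (t * ∑ i ∈ S, x i)
      = (s.val.map fun i => exp (t * x i)).esymm q := by
        simp only [Finset.esymm_map_val, Finset.mul_sum, exp_sum]
    _ ≤ s.card.choose q * ((∑ i ∈ s, exp (t * x i)) / s.card) ^ q := by
        simpa using esymm_le_choose_mul_mean_pow
          (s := s.val.map fun i => exp (t * x i)) (by simp [exp_nonneg]) q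
    _ ≤ _ := by
        rw [exp_nat_mul]
        gcongr
        exact mean_exp_le_of_mem_Icc hx t

theorem card_filter_sum_le_le_choose_mul_exp (hab : a < b) (hx : ∀ i ∈ s, x i ∈ Set.Icc a b)
    (q : ℕ) {ρ ε : ℝ} (hε : 0 ≤ ε) (hρ : ρ + ε ≤ (∑ i ∈ s, x i) / s.card) :
    (((s.powersetCard q).filter fun S => ∑ i ∈ S, x i ≤ q * ρ).card : ℝ) ≤
      s.card.choose q * exp (-2 * q * ε ^ 2 / (b - a) ^ 2) := by
  set μ := (∑ i ∈ s, x i) / s.card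
  set F := (s.powersetCard q).filter fun S => ∑ i ∈ S, x i ≤ q * ρ
  have hba : b - a ≠ 0 := (sub_pos.2 hab).ne'
  -- This `t` minimizes the exponent `q * (t * ε + (b - a) ^ 2 * t ^ 2 / 8)`.
  obtain ⟨t, ht⟩ : ∃ t, t = -(4 * ε / (b - a) ^ 2) := ⟨_, rfl⟩
  have t_nonpos : t ≤ 0 := by
    rw [ht, neg_nonpos]
    positivity
  have chernoff : F.card * exp (t * (q * ρ)) ≤
      s.card.choose q * exp (q * (t * μ + (b - a) ^ 2 * t ^ 2 / 8)) :=
    calc F.card * exp (t * (q * ρ))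
        ≤ ∑ S ∈ F, exp (t * ∑ i ∈ S, x i) := by
          rw [← nsmul_eq_mul]
          exact Finset.card_nsmul_le_sum _ _ _ fun S hS =>
            exp_le_exp.2 (mul_le_mul_of_nonpos_left (Finset.mem_filter.1 hS).2 t_nonpos)
      _ ≤ ∑ S ∈ s.powersetCard q, exp (t * ∑ i ∈ S, x i) :=
          Finset.sum_le_sum_of_subset_of_nonneg (Finset.filter_subset _ _)
            fun _ _ _ => exp_nonneg _
      _ ≤ _ := sum_powersetCard_exp_le hx q t
  rw [← le_div_iff₀ (exp_pos _), mul_div_assoc, ← exp_sub] at chernoff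
  refine chernoff.trans ?_
  gcongr
  calc q * (t * μ + (b - a) ^ 2 * t ^ 2 / 8) - t * (q * ρ)
      = q * (t * (μ - ρ) + (b - a) ^ 2 * t ^ 2 / 8) := by ring
    _ ≤ q * (t * ε + (b - a) ^ 2 * t ^ 2 / 8) := by
        gcongr ?_ * (?_ + _)
        exact mul_le_mul_of_nonpos_left (by linarith) t_nonpos
    _ = -2 * q * ε ^ 2 / (b - a) ^ 2 := by
        rw [ht]
        field_simp
        ring

end Hoeffding

theorem sq_mul_div_cube_le_mul_div_sq {K : Type*} [Field K] [LinearOrder K] [IsStrictOrderedRing K]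
    {q m y : K} (hq : 0 ≤ q) (hqm : q ≤ m) (hy : 0 ≤ y) : q ^ 2 * y / m ^ 3 ≤ q * y / m ^ 2 :=
  calc q ^ 2 * y / m ^ 3 = q * y / m ^ 2 * (q / m) := by ring
    _ ≤ q * y / m ^ 2 := mul_le_of_le_one_right (by positivity)
        (div_le_one_of_le₀ hqm (hq.trans hqm))

section Envy

variable {m : ℕ} {μa μb : Fin m → ℝ} {c : ℝ}

theorem mul_neg_envy_le_sum_abs (hc : 0 ≤ c) (A : Finset (Fin m)) :
    (1 + c) * -envy μa μb A ≤ ∑ i, |c * μa i - μb i| := by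
  have ha : envyAB μa A ≤ envy μa μb A := le_max_left _ _
  have hb : envyBA μb A ≤ envy μa μb A := le_max_right _ _
  calc (1 + c) * -envy μa μb A
      ≤ -(c * envyAB μa A) - envyBA μb A := by
        linarith [mul_le_mul_of_nonneg_left ha hc]
    _ = ∑ i ∈ A, (c * μa i - μb i) + ∑ i ∈ Aᶜ, -(c * μa i - μb i) := by
        simp only [envyAB, envyBA, Finset.sum_neg_distrib, Finset.sum_sub_distrib,
          ← Finset.mul_sum]
        ring
    _ ≤ ∑ i ∈ A, |c * μa i - μb i| + ∑ i ∈ Aᶜ, |c * μa i - μb i| := by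
        gcongr
        exacts [le_abs_self _, neg_le_abs _]
    _ = ∑ i, |c * μa i - μb i| := Finset.sum_add_sum_compl A _

theorem mul_neg_optEnvy_le_sum_abs (hc : 0 ≤ c) :
    (1 + c) * -optEnvy μa μb ≤ ∑ i, |c * μa i - μb i| := by
  obtain ⟨A, hA⟩ := exists_eq_ciInf_of_finite (f := envy μa μb)
  rw [optEnvy, ← hA]
  exact mul_neg_envy_le_sum_abs hc A

theorem abs_mul_sub_mem_Icc {u v : ℝ} (hu : u ∈ Set.Icc (0 : ℝ) 1) (hv : v ∈ Set.Icc (0 : ℝ) 1)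
    (hc : 0 ≤ c) : |c * u - v| ∈ Set.Icc 0 (1 + c) := by
  have hcu : 0 ≤ c * u := mul_nonneg hc hu.1
  have hcu' : c * u ≤ c := mul_le_of_le_one_right hc hu.2
  exact ⟨abs_nonneg _, abs_le.2 ⟨by linarith [hv.2], by linarith [hv.1]⟩⟩

theorem stmt17_general (hμa : ∀ i, μa i ∈ Set.Icc (0 : ℝ) 1)
    (hμb : ∀ i, μb i ∈ Set.Icc (0 : ℝ) 1) {Δ : ℝ} (hΔ : 0 ≤ Δ) (hopt : optEnvy μa μb ≤ -Δ)
    {q : ℕ} (hq : q ≤ m) (hc : 0 ≤ c) :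
    (((Finset.powersetCard q (Finset.univ : Finset (Fin m))).filter fun S =>
          ∑ i ∈ S, |c * μa i - μb i| ≤ (1 + c) * (1 / 2 * ((q : ℝ) / m) * Δ)).card : ℝ) /
        (m.choose q : ℝ) ≤
      exp (-(1 / 2) * q * Δ ^ 2 / m ^ 2) := by
  set ε : ℝ := (1 + c) * (Δ / (2 * m)) with hε
  have threshold : (1 + c) * (1 / 2 * ((q : ℝ) / m) * Δ) = q * ε := by
    rw [hε]
    ring
  have mean_ge : ε + ε ≤ (∑ i, |c * μa i - μb i|) / (Finset.univ : Finset (Fin m)).card :=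
    calc ε + ε = (1 + c) * Δ / m := by rw [hε]; ring
      _ ≤ (1 + c) * -optEnvy μa μb / m := by gcongr; linarith
      _ ≤ _ := by
          rw [Finset.card_fin]
          gcongr
          exact mul_neg_optEnvy_le_sum_abs hc
  have exponent : -2 * q * ε ^ 2 / (1 + c - 0) ^ 2 = -(1 / 2) * q * Δ ^ 2 / m ^ 2 := by
    have hc1 : 1 + c ≠ 0 := by positivity
    rw [hε, sub_zero, mul_pow, mul_left_comm, mul_div_cancel_left₀ _ (pow_ne_zero 2 hc1)]
    ring
  rw [div_le_iff₀' (Nat.cast_pos.2 (Nat.choose_pos hq)), threshold, ← exponent]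
  simpa only [Finset.card_fin] using card_filter_sum_le_le_choose_mul_exp (by positivity)
    (fun i _ => abs_mul_sub_mem_Icc (hμa i) (hμb i) hc) q (by positivity) mean_ge

end Envy

/-- if `OptEnvy ≤ -Δ` and `S` is a uniformly random subset of `{1,…,m}` of
size `q` (all `C(m,q)` subsets equally likely), then with `Δ' = (1/2)(q/m)Δ`,
`P[∑_{i∈S} |c μ^a_i − μ^b_i| ≤ (1+c)Δ'] ≤ exp(−(1/2) q²Δ²/m³)` for every `c > 0`. -/
theorem stmt17 {m : ℕ} (μa μb : Fin m → ℝ)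
    (hμa : ∀ i, μa i ∈ Set.Icc (0 : ℝ) 1) (hμb : ∀ i, μb i ∈ Set.Icc (0 : ℝ) 1)
    (Δ : ℝ) (hΔ : 0 < Δ) (hopt : optEnvy μa μb ≤ -Δ)
    (q : ℕ) (hq1 : 1 ≤ q) (hq2 : q ≤ m) (c : ℝ) (hc : 0 < c) :
    (((Finset.powersetCard q (Finset.univ : Finset (Fin m))).filter fun S =>
          ∑ i ∈ S, |c * μa i - μb i| ≤ (1 + c) * (1 / 2 * ((q : ℝ) / m) * Δ)).card : ℝ) /
        (m.choose q : ℝ) ≤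
      Real.exp (-(1 / 2) * q ^ 2 * Δ ^ 2 / m ^ 3) :=
  (stmt17_general hμa hμb hΔ.le hopt hq2 hc.le).trans <| exp_le_exp.2 <| by
    linear_combination (1 / 2) *
      sq_mul_div_cube_le_mul_div_sq (Nat.cast_nonneg (α := ℝ) q) (Nat.cast_le.2 hq2) (sq_nonneg Δ)
end
end

section
/- Let m be divisible by 4, let δ ∈ (0,1), Δ ∈ (0,m), and γ ∈ (0, 1/2] satisfy 2√(log(2/δ)·m) ≤ m/2 and 4(Δ+1)/m ≤ 1/2, and set ε = 2(Δ+1)/(m − 2√(log(2/δ)·m)). Consider the hard instance with parameters ε and γ, where the latent variables X_1,…,X_m are i.i.d. Bernoulli(1/2). Then with probability at least 1 − δ over X, the resulting utility profiles satisfy OptEnvy ≤ −Δ. -/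
open Real
open scoped Classical

noncomputable section

/-- The hard instance's utilities for agent a, given parameters `ε, γ` and latent variables
`X` (items are indexed from `0`, so the "first half" is `i < m/2`): for `i < m/2`,
`μ^a_i = 1/2 + ε` if `X_i = 1` and `1/2 − ε` otherwise; for `i ≥ m/2`,
`μ^a_i = 1/2 + γ` if `X_i = 1` and `1/2 − γ` otherwise. -/
def hardμa (m : ℕ) (ε γ : ℝ) (X : Fin m → Bool) (i : Fin m) : ℝ :=
  if (i : ℕ) < m / 2 then (if X i then 1 / 2 + ε else 1 / 2 - ε)
  else (if X i then 1 / 2 + γ else 1 / 2 - γ)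

/-- The hard instance's utilities for agent b: for `i < m/2`, `μ^b_i = 1/2 − ε` if `X_i = 1`
and `1/2 + ε` otherwise; for `i ≥ m/2`, `μ^b_i = μ^a_i`. -/
def hardμb (m : ℕ) (ε γ : ℝ) (X : Fin m → Bool) (i : Fin m) : ℝ :=
  if (i : ℕ) < m / 2 then (if X i then 1 / 2 - ε else 1 / 2 + ε)
  else (if X i then 1 / 2 + γ else 1 / 2 - γ)

/-!
Envy is half of the absolute imbalance of `μᵃ + μᵇ` plus half of the imbalance of `μᵃ - μᵇ`. The
difference vanishes on the second half of the items, so the first half can be used to make it as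
negative as possible. Give each agent about half of those items; then only as many of them need to
be misplaced as the number of ones among the `X i` deviates from half. The sum, which is at most `2`
per item, is then kept at most `2` in absolute value by assigning the remaining items greedily.
By Hoeffding's inequality the deviation `|∑ ±1|` over the `⌊m/2⌋` items of the first half exceeds
`√(2 log (2/δ) ⌊m/2⌋)` with probability at most `δ`.
-/

open Finset MeasureTheory ProbabilityTheory
open scoped symmDiff NNReal

section Imbalance

variable {ι : Type*} [DecidableEq ι] {F G S T A B : Finset ι} {v : ι → ℝ}

/-- The value under `v` of the items of `T` outside `A`, minus the value of those inside `A`. -/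
def imbalance (v : ι → ℝ) (T A : Finset ι) : ℝ :=
  ∑ i ∈ T, if i ∈ A then -v i else v i

lemma imbalance_congr_right (h : ∀ i ∈ T, i ∈ A ↔ i ∈ B) :
    imbalance v T A = imbalance v T B :=
  sum_congr rfl fun i hi => by simp only [h i hi]

lemma imbalance_congr_left {w : ι → ℝ} (h : ∀ i ∈ T, v i = w i) :
    imbalance v T A = imbalance w T A :=
  sum_congr rfl fun i hi => by simp only [h i hi]

lemma imbalance_insert {a : ι} (ha : a ∉ T) :
    imbalance v (insert a T) A = (if a ∈ A then -v a else v a) + imbalance v T A :=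
  sum_insert ha

lemma imbalance_add (v w : ι → ℝ) (T A : Finset ι) :
    imbalance (v + w) T A = imbalance v T A + imbalance w T A := by
  rw [imbalance, imbalance, imbalance, ← sum_add_distrib]
  exact sum_congr rfl fun i _ => by split_ifs <;> simp [add_comm]

lemma imbalance_sub (v w : ι → ℝ) (T A : Finset ι) :
    imbalance (v - w) T A = imbalance v T A - imbalance w T A := by
  rw [eq_sub_iff_add_eq, ← imbalance_add, sub_add_cancel]

lemma imbalance_smul (c : ℝ) (v : ι → ℝ) (T A : Finset ι) :
    imbalance (c • v) T A = c * imbalance v T A := by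
  simp only [imbalance, mul_sum, mul_ite, mul_neg, Pi.smul_apply, smul_eq_mul]

lemma imbalance_eq_of_subset (hFT : F ⊆ T) (h : ∀ i ∈ T, i ∉ F → v i = 0) :
    imbalance v T A = imbalance v F A :=
  (sum_subset hFT fun i hT hF => by simp [h i hT hF]).symm

lemma imbalance_one (hS : S ⊆ F) : imbalance 1 F S = #F - 2 * #S := by
  have hterm (i : ι) : (if i ∈ S then -(1 : ι → ℝ) i else (1 : ι → ℝ) i) =
      1 - 2 * if i ∈ S then 1 else 0 := by
    split_ifs <;> norm_num
  simp only [imbalance, hterm, sum_sub_distrib, ← mul_sum, sum_ite_mem, inter_eq_right.2 hS,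
    sum_const, nsmul_eq_mul, mul_one]

lemma abs_add_le_or_abs_sub_le {M : Type*} [AddCommGroup M] [LinearOrder M]
    [IsOrderedAddMonoid M] {x y r : M} (hx : |x| ≤ r) (hy : |y| ≤ r) :
    |x + y| ≤ r ∨ |x - y| ≤ r := by
  simp only [abs_le] at *
  rcases le_total 0 x with hx0 | hx0 <;> rcases le_total 0 y with hy0 | hy0 <;> grind

lemma exists_abs_imbalance_union_le {r : ℝ} (hF : |imbalance v F S| ≤ r)
    (hG : ∀ i ∈ G, |v i| ≤ r) :
    ∃ A, (∀ i ∈ F, i ∈ A ↔ i ∈ S) ∧ |imbalance v (F ∪ G) A| ≤ r := by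
  induction G using Finset.induction_on with
  | empty => exact ⟨S, fun _ _ => Iff.rfl, by rwa [union_empty]⟩
  | insert a G _ ih =>
    obtain ⟨A, hAF, hA⟩ := ih fun i hi => hG i (mem_insert_of_mem hi)
    rw [union_insert]
    by_cases ha : a ∈ F ∪ G
    · exact ⟨A, hAF, by rwa [insert_eq_of_mem ha]⟩
    have hne : ∀ i ∈ F ∪ G, i ≠ a := fun i hi => ne_of_mem_of_not_mem hi ha
    have hneF : ∀ i ∈ F, i ≠ a := fun i hi => hne i (mem_union_left G hi)
    rcases abs_add_le_or_abs_sub_le hA (hG a (mem_insert_self a G)) with hadd | hsub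
    · refine ⟨A.erase a, fun i hi => by simp [hneF i hi, hAF i hi], ?_⟩
      rw [imbalance_insert ha, if_neg (notMem_erase a A), add_comm,
        imbalance_congr_right (B := A) fun i hi => by simp [hne i hi]]
      exact hadd
    · refine ⟨insert a A, fun i hi => by simp [hneF i hi, hAF i hi], ?_⟩
      rw [imbalance_insert ha, if_pos (mem_insert_self a A), neg_add_eq_sub,
        imbalance_congr_right (B := A) fun i hi => by simp [hne i hi]]
      exact hsub

end Imbalance

section Spin

/-- The sign `±1` encoded by a bit, so that `spin` of a fair bit is a Rademacher variable. -/
def spin (b : Bool) : ℝ := if b then 1 else -1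

variable {ι : Type*}

lemma sum_spin (X : ι → Bool) (F : Finset ι) :
    ∑ i ∈ F, spin (X i) = 2 * #{i ∈ F | X i} - #F := by
  have hspin (b : Bool) : spin b = 2 * (if b then 1 else 0) - 1 := by
    cases b <;> norm_num [spin]
  simp only [hspin, sum_sub_distrib, ← mul_sum, sum_boole, sum_const, nsmul_eq_mul, mul_one]

variable [DecidableEq ι] {F K S : Finset ι}

lemma imbalance_spin (X : ι → Bool) (hS : S ⊆ F) :
    imbalance (fun i => spin (X i)) F S = 2 * #(S ∆ {i ∈ F | X i}) - #F := by
  have hsub : S ∆ {i ∈ F | X i} ⊆ F :=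
    symmDiff_subset_union.trans (union_subset hS (filter_subset _ F))
  have hterm : ∀ i ∈ F, (if i ∈ S then -spin (X i) else spin (X i)) =
      2 * (if i ∈ S ∆ {i ∈ F | X i} then 1 else 0) - 1 := fun i hi => by
    by_cases hiS : i ∈ S <;> cases hX : X i <;> norm_num [mem_symmDiff, spin, hi, hiS, hX]
  rw [imbalance, sum_congr rfl hterm, sum_sub_distrib, ← mul_sum, sum_ite_mem,
    inter_eq_right.2 hsub]
  simp only [sum_const, nsmul_eq_mul, mul_one]

lemma exists_subset_card_eq_card_symmDiff_eq {n : ℕ} (hK : K ⊆ F) (hn : n ≤ #F) :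
    ∃ S ⊆ F, #S = n ∧ (#(S ∆ K) : ℤ) = |(n : ℤ) - #K| := by
  rcases le_total n #K with h | h
  · obtain ⟨S, hSK, rfl⟩ := exists_subset_card_eq h
    refine ⟨S, hSK.trans hK, rfl, ?_⟩
    rw [symmDiff_of_le hSK, card_sdiff_of_subset hSK]
    grind
  · obtain ⟨S, hKS, hSF, rfl⟩ := exists_subsuperset_card_eq hK h hn
    refine ⟨S, hSF, rfl, ?_⟩
    rw [symmDiff_of_ge hKS, card_sdiff_of_subset hKS]
    grind

lemma exists_abs_imbalance_one_le_imbalance_spin_le (X : ι → Bool) (F : Finset ι) :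
    ∃ S ⊆ F, |imbalance 1 F S| ≤ 1 ∧
      imbalance (fun i => spin (X i)) F S ≤ |∑ i ∈ F, spin (X i)| - #F := by
  -- For odd `#F`, `#F / 2` is rounded towards the number of ones.
  obtain ⟨n, hnF, hhalf, hdev⟩ : ∃ n ≤ #F, |(#F : ℤ) - 2 * n| ≤ 1 ∧
      2 * |(n : ℤ) - #{i ∈ F | X i}| ≤ |2 * (#{i ∈ F | X i} : ℤ) - #F| := by
    rcases le_total (2 * #{i ∈ F | X i}) #F with h | h
    · exact ⟨#F / 2, by grind⟩
    · exact ⟨(#F + 1) / 2, by grind [card_filter_le F (X · = true)]⟩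
  obtain ⟨S, hSF, rfl, hS⟩ :=
    exists_subset_card_eq_card_symmDiff_eq (filter_subset (X · = true) F) hnF
  refine ⟨S, hSF, ?_, ?_⟩
  · rw [imbalance_one hSF]
    exact_mod_cast hhalf
  · rw [imbalance_spin X hSF, sum_spin]
    gcongr
    rw [← hS] at hdev
    exact_mod_cast hdev

end Spin

section Envy

variable {m : ℕ}

lemma envyAB_eq_imbalance (μ : Fin m → ℝ) (A : Finset (Fin m)) :
    envyAB μ A = imbalance μ univ A := by
  simp [envyAB, imbalance, sum_ite, ← compl_filter, sub_eq_neg_add]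

lemma envyBA_eq_neg_imbalance (μ : Fin m → ℝ) (A : Finset (Fin m)) :
    envyBA μ A = -imbalance μ univ A := by
  rw [← envyAB_eq_imbalance, envyAB, envyBA, neg_sub]

lemma envy_eq (μa μb : Fin m → ℝ) (A : Finset (Fin m)) :
    envy μa μb A =
      (|imbalance (μa + μb) univ A| + imbalance (μa - μb) univ A) / 2 := by
  have hmax := two_nsmul_sup_eq_add_add_abs_sub (-imbalance μb univ A) (imbalance μa univ A)
  rw [envy, envyAB_eq_imbalance, envyBA_eq_neg_imbalance, imbalance_add, imbalance_sub, max_comm]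
  rw [two_nsmul, sub_neg_eq_add] at hmax
  linarith

lemma optEnvy_le_envy (μa μb : Fin m → ℝ) (A : Finset (Fin m)) :
    optEnvy μa μb ≤ envy μa μb A :=
  ciInf_le (Set.finite_range _).bddBelow A

lemma optEnvy_le_of_opposed {μa μb : Fin m → ℝ} {F : Finset (Fin m)} {X : Fin m → Bool} {ε : ℝ}
    (hε : 0 ≤ ε) (hsum : ∀ i ∈ F, μa i + μb i = 1) (hsum_le : ∀ i, |μa i + μb i| ≤ 2)
    (hdiff : ∀ i ∈ F, μa i - μb i = 2 * ε * spin (X i)) (heq : ∀ i ∉ F, μa i = μb i) :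
    optEnvy μa μb ≤ 1 - ε * (#F - |∑ i ∈ F, spin (X i)|) := by
  obtain ⟨S, -, hSone, hSspin⟩ := exists_abs_imbalance_one_le_imbalance_spin_le X F
  have hSsum : |imbalance (μa + μb) F S| ≤ 2 := by
    have hone : imbalance (μa + μb) F S = imbalance 1 F S := imbalance_congr_left hsum
    exact hone ▸ hSone.trans one_le_two
  obtain ⟨A, hAS, hA⟩ :=
    exists_abs_imbalance_union_le (G := univ) hSsum fun i _ => hsum_le i
  rw [union_eq_right.2 (subset_univ F)] at hA
  have hAdiff : imbalance (μa - μb) univ A = 2 * ε * imbalance (fun i => spin (X i)) F S := by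
    have hoff : ∀ i ∈ univ, i ∉ F → (μa - μb) i = 0 := fun i _ hi => sub_eq_zero.2 (heq i hi)
    rw [imbalance_eq_of_subset (subset_univ F) hoff, imbalance_congr_right hAS, ← imbalance_smul]
    exact imbalance_congr_left hdiff
  calc optEnvy μa μb ≤ envy μa μb A := optEnvy_le_envy μa μb A
    _ = |imbalance (μa + μb) univ A| / 2 + ε * imbalance (fun i => spin (X i)) F S := by
      rw [envy_eq, hAdiff]; ring
    _ ≤ 2 / 2 + ε * (|∑ i ∈ F, spin (X i)| - #F) := by gcongr
    _ = 1 - ε * (#F - |∑ i ∈ F, spin (X i)|) := by ring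

/-- The items on which the agents of the hard instance have opposed preferences. -/
def firstHalf (m : ℕ) : Finset (Fin m) := {i | (i : ℕ) < m / 2}

lemma card_firstHalf (m : ℕ) : #(firstHalf m) = m / 2 := by
  rw [firstHalf, Fin.card_filter_val_lt, min_eq_right (Nat.div_le_self m 2)]

lemma mem_firstHalf {i : Fin m} : i ∈ firstHalf m ↔ (i : ℕ) < m / 2 :=
  mem_filter_univ i

lemma optEnvy_hard_le {ε γ : ℝ} (hε : 0 ≤ ε) (hγ : |γ| ≤ 1 / 2) (X : Fin m → Bool) :
    optEnvy (hardμa m ε γ X) (hardμb m ε γ X) ≤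
      1 - ε * ((m / 2 : ℕ) - |∑ i ∈ firstHalf m, spin (X i)|) := by
  rw [abs_le] at hγ
  rw [← card_firstHalf m]
  refine optEnvy_le_of_opposed hε (fun i hi => ?_) (fun i => ?_) (fun i hi => ?_) fun i hi => ?_
  · rw [mem_firstHalf] at hi
    simp only [hardμa, hardμb, if_pos hi]
    split_ifs <;> ring
  · simp only [hardμa, hardμb, abs_le]
    split_ifs <;> constructor <;> linarith
  · rw [mem_firstHalf] at hi
    simp only [hardμa, hardμb, if_pos hi, spin]
    split_ifs <;> ring
  · rw [mem_firstHalf] at hi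
    simp only [hardμa, hardμb, if_neg hi]

end Envy

section Rademacher

lemma measureReal_uniformOn_univ {Ω : Type*} [Fintype Ω] [MeasurableSpace Ω]
    [MeasurableSingletonClass Ω] (p : Ω → Prop) [DecidablePred p] :
    (uniformOn (Set.univ : Set Ω)).real {ω | p ω} = #{ω | p ω} / Fintype.card Ω := by
  rw [measureReal_def, uniformOn_univ, ← coe_filter_univ, Measure.count_apply_finset]
  simp

lemma measureReal_le_abs_le_of_hasSubgaussianMGF {Ω : Type*} [MeasurableSpace Ω] {μ : Measure Ω}
    {Y : Ω → ℝ} {c : ℝ≥0} (hY : HasSubgaussianMGF Y c μ) {r : ℝ} (hr : 0 ≤ r) :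
    μ.real {ω | r ≤ |Y ω|} ≤ 2 * exp (-r ^ 2 / (2 * c)) := by
  have hcover : {ω | r ≤ |Y ω|} = {ω | r ≤ Y ω} ∪ {ω | r ≤ (-Y) ω} := by
    ext ω
    exact le_abs (a := r) (b := Y ω)
  calc μ.real {ω | r ≤ |Y ω|} ≤ μ.real {ω | r ≤ Y ω} + μ.real {ω | r ≤ (-Y) ω} :=
        hcover ▸ measureReal_union_le _ _
    _ ≤ exp (-r ^ 2 / (2 * c)) + exp (-r ^ 2 / (2 * c)) :=
        add_le_add (hY.measure_ge_le hr) (hY.neg.measure_ge_le hr)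
    _ = 2 * exp (-r ^ 2 / (2 * c)) := (two_mul _).symm

lemma hasSubgaussianMGF_spin : HasSubgaussianMGF spin 1 (uniformOn (Set.univ : Set Bool)) where
  integrable_exp_mul _ := .of_finite
  mgf_le t := by
    have hfair (b : Bool) : (uniformOn (Set.univ : Set Bool)).real {b} = 1 / 2 := by
      rw [← Set.ofPred_eq_eq_singleton, measureReal_uniformOn_univ]
      simp [filter_eq']
    have hmgf : mgf spin (uniformOn Set.univ) t = cosh t := by
      rw [mgf, integral_fintype .of_finite, cosh_eq, Fintype.sum_bool, hfair, hfair]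
      simp only [spin, smul_eq_mul, if_true, Bool.false_eq_true, if_false]
      ring_nf
    simpa only [hmgf, NNReal.coe_one, one_mul] using cosh_le_exp_half_sq t

variable {ι : Type*} [Finite ι]

lemma hasSubgaussianMGF_sum_spin (s : Finset ι) :
    HasSubgaussianMGF (fun X : ι → Bool => ∑ i ∈ s, spin (X i)) #s (uniformOn Set.univ) := by
  cases nonempty_fintype ι
  have hpi : uniformOn (Set.univ : Set (ι → Bool)) = Measure.pi fun _ => uniformOn Set.univ := by
    rw [← uniformOn_pi, Set.pi_univ]
  have hcoord (i : ι) : HasSubgaussianMGF (fun X : ι → Bool => spin (X i)) 1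
      (Measure.pi fun _ => uniformOn (Set.univ : Set Bool)) :=
    .of_map (measurable_pi_apply i).aemeasurable <| by
      rw [(measurePreserving_eval (fun _ : ι => uniformOn (Set.univ : Set Bool)) i).map_eq]
      exact hasSubgaussianMGF_spin
  have hindep : iIndepFun (fun i (X : ι → Bool) => spin (X i))
      (Measure.pi fun _ => uniformOn Set.univ) :=
    iIndepFun_pi fun _ => Measurable.of_discrete.aemeasurable
  simpa [hpi] using HasSubgaussianMGF.sum_of_iIndepFun hindep (s := s) fun i _ => hcoord i

lemma measureReal_sqrt_lt_abs_sum_spin_le (s : Finset ι) {δ : ℝ} (hδ : 0 < δ) :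
    (uniformOn (Set.univ : Set (ι → Bool))).real
      {X | √(2 * log (2 / δ) * #s) < |∑ i ∈ s, spin (X i)|} ≤ δ := by
  rcases s.eq_empty_or_nonempty with rfl | hs
  · simpa using hδ.le
  set r := √(2 * log (2 / δ) * #s)
  have hr : log (2 / δ) ≤ r ^ 2 / (2 * #s) := by
    rw [le_div_iff₀ (by positivity)]
    calc log (2 / δ) * (2 * #s) = 2 * log (2 / δ) * #s := by ring
      _ ≤ r ^ 2 := (sqrt_le_left (sqrt_nonneg _)).1 le_rfl
  calc (uniformOn (Set.univ : Set (ι → Bool))).real {X | r < |∑ i ∈ s, spin (X i)|}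
    _ ≤ (uniformOn (Set.univ : Set (ι → Bool))).real {X | r ≤ |∑ i ∈ s, spin (X i)|} :=
        measureReal_mono (Set.ofPred_subset_ofPred_of_imp fun _ => le_of_lt)
    _ ≤ 2 * exp (-r ^ 2 / (2 * #s)) :=
        measureReal_le_abs_le_of_hasSubgaussianMGF (hasSubgaussianMGF_sum_spin s) (sqrt_nonneg _)
    _ ≤ 2 * exp (-log (2 / δ)) := by
        rw [neg_div]
        gcongr
    _ = δ := by
        rw [exp_neg, exp_log (by positivity)]
        field_simp

end Rademacher

lemma one_sub_le_card_optEnvy_hard_le_div (m : ℕ) {δ ε γ : ℝ} (hδ : 0 < δ) (hε : 0 ≤ ε)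
    (hγ : |γ| ≤ 1 / 2) :
    1 - δ ≤
      (#{X : Fin m → Bool | optEnvy (hardμa m ε γ X) (hardμb m ε γ X) ≤
          1 - ε * ((m / 2 : ℕ) - √(2 * log (2 / δ) * (m / 2 : ℕ)))} : ℝ) / 2 ^ m := by
  set r := √(2 * log (2 / δ) * (m / 2 : ℕ)) with hr
  set μ := uniformOn (Set.univ : Set (Fin m → Bool)) with hμ
  have hbad := measureReal_sqrt_lt_abs_sum_spin_le (firstHalf m) hδ
  rw [card_firstHalf, ← hr] at hbad
  have hgood : {X : Fin m → Bool | r < |∑ i ∈ firstHalf m, spin (X i)|}ᶜ ⊆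
      {X | optEnvy (hardμa m ε γ X) (hardμb m ε γ X) ≤ 1 - ε * ((m / 2 : ℕ) - r)} := by
    intro X hX
    refine (optEnvy_hard_le hε hγ X).trans ?_
    gcongr
    exact not_lt.1 hX
  calc 1 - δ ≤ 1 - μ.real {X | r < |∑ i ∈ firstHalf m, spin (X i)|} := sub_le_sub_left hbad 1
    _ = μ.real {X | r < |∑ i ∈ firstHalf m, spin (X i)|}ᶜ :=
      (probReal_compl_eq_one_sub .of_discrete).symm
    _ ≤ μ.real {X | optEnvy (hardμa m ε γ X) (hardμb m ε γ X) ≤ 1 - ε * ((m / 2 : ℕ) - r)} :=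
      measureReal_mono hgood
    _ = _ := by
      rw [hμ, measureReal_uniformOn_univ, Fintype.card_pi_const, Fintype.card_bool, Nat.cast_pow,
        Nat.cast_ofNat]

theorem stmt18_general (m : ℕ) (hm : Even m) (δ Δ γ : ℝ) (hδ : 0 < δ) (hΔ : -1 ≤ Δ)
    (hγ : |γ| ≤ 1 / 2) (hpos : 2 * √(log (2 / δ) * m) < m) (ε : ℝ)
    (hε : 2 * (Δ + 1) / (m - 2 * √(log (2 / δ) * m)) ≤ ε) :
    1 - δ ≤
      (#{X : Fin m → Bool | optEnvy (hardμa m ε γ X) (hardμb m ε γ X) ≤ -Δ} : ℝ) / 2 ^ m := by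
  have hhalf : ((m / 2 : ℕ) : ℝ) = m / 2 := Nat.cast_div_charZero hm.two_dvd
  have hε0 : 0 ≤ ε := (div_nonneg (by linarith) (by linarith)).trans hε
  have hthreshold : 1 - ε * ((m / 2 : ℕ) - √(2 * log (2 / δ) * (m / 2 : ℕ))) ≤ -Δ := by
    rw [div_le_iff₀ (by linarith)] at hε
    rw [hhalf, show 2 * log (2 / δ) * (m / 2) = log (2 / δ) * m by ring]
    linarith
  refine (one_sub_le_card_optEnvy_hard_le_div m hδ hε0 hγ).trans ?_
  gcongr

/-- for the hard instance with i.i.d. `Bernoulli(1/2)` latent variables `X`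
(all `2^m` values equally likely) and `ε = 2(Δ+1)/(m − 2√(log(2/δ) m))`, with probability at
least `1 − δ` the instance satisfies `OptEnvy ≤ −Δ`. -/
theorem stmt18 (m : ℕ) (hm : 4 ∣ m) (δ Δ γ : ℝ)
    (hδ : δ ∈ Set.Ioo (0 : ℝ) 1) (hΔ : Δ ∈ Set.Ioo (0 : ℝ) (m : ℝ))
    (hγ : γ ∈ Set.Ioc (0 : ℝ) (1 / 2))
    (h1 : 2 * Real.sqrt (Real.log (2 / δ) * m) ≤ m / 2)
    (h2 : 4 * (Δ + 1) / m ≤ 1 / 2)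
    (ε : ℝ) (hε : ε = 2 * (Δ + 1) / (m - 2 * Real.sqrt (Real.log (2 / δ) * m))) :
    1 - δ ≤
      ((Finset.univ.filter fun X : Fin m → Bool =>
          optEnvy (hardμa m ε γ X) (hardμb m ε γ X) ≤ -Δ).card : ℝ) / 2 ^ m :=
  stmt18_general m (even_iff_two_dvd.2 (dvd_trans (by norm_num) hm)) δ Δ γ hδ.1
    (by linarith [hΔ.1]) (abs_le.2 ⟨by linarith [hγ.1], hγ.2⟩) (by linarith [hΔ.1, hΔ.2]) ε hε.ge
end
end

section
/- Let m be even, let ε, γ ∈ (0, 1/2] and X ∈ {0,1}^m, and consider the hard instance with parameters ε and γ and latent variables X. Let Â = (Â_a, Â_b) be any allocation, let X̂ ∈ {0,1}^m be its indicator (X̂_i = 1 if i ∈ Â_a and X̂_i = 0 if i ∈ Â_b), and define Â_ε = {i ≤ m/2 : X̂_i = 1}, B̂_ε = {i ≤ m/2 : X̂_i = 0}, S_i = 1 if i ∈ Â_a and S_i = −1 otherwise, and V_γ = ∑_{i > m/2} S_i μ^a_i. If there exists a constant K > 0 such that d_H(X_{[1:m/2]}, X̂_{[1:m/2]}) > m/4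 − Kγ√m/(2ε) and |(1/2)(|Â_ε| − |B̂_ε|) + V_γ| ≥ Kγ√m, where d_H denotes Hamming distance on the first m/2 coordinates, then Envy(Â) > 0. -/
open Real
open scoped Classical

noncomputable section

/-!
Split the two utilities as `μa = μ + δ` and `μb = μ - δ`, and let `S_i` be `1` or `-1` according
to whether agent a receives item `i`. Agent b's envy is the signed sum `∑ S_i μb_i` and agent a's
is `-∑ S_i μa_i`, so the larger of the two is exactly `|∑ S_i μ_i| - ∑ S_i δ_i`. In the hard
instance `δ` vanishes on the second half, while on the first half `S_i δ_i` is `ε` or `-ε`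
according to whether the allocation agrees with `X` at `i`; hence
`∑ S_i δ_i = ε (⌊m/2⌋ - 2 d_H)`, which a large Hamming distance keeps below `|∑ S_i μ_i|`.
-/

section SignedSums

open Finset

variable {ι R : Type*}

theorem sum_ite_one_neg_one [AddCommGroupWithOne R] (s : Finset ι) (p : ι → Prop)
    [DecidablePred p] :
    ∑ i ∈ s, (if p i then (1 : R) else -1) = #{i ∈ s | p i} - #{i ∈ s | ¬p i} := by
  rw [sum_ite, sum_const, sum_const, smul_neg, nsmul_one, nsmul_one, sub_eq_add_neg]

theorem sum_ite_one_neg_one_eq_card_sub [NonAssocRing R] (s : Finset ι) (p : ι → Prop)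
    [DecidablePred p] :
    ∑ i ∈ s, (if p i then (1 : R) else -1) = #s - 2 * #{i ∈ s | ¬p i} := by
  rw [sum_ite_one_neg_one, ← card_filter_add_card_filter_not (s := s) p, Nat.cast_add, two_mul]
  abel

variable [Fintype ι] [DecidableEq ι]

/-- The value under `μ` of the bundle `A` in excess of that of its complement, written with the
signs `S_i = ±1`. -/
def bundleGap (μ : ι → ℝ) (A : Finset ι) : ℝ :=
  ∑ i, (if i ∈ A then 1 else -1) * μ i

theorem bundleGap_eq_sum_sub_sum_compl (μ : ι → ℝ) (A : Finset ι) :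
    bundleGap μ A = ∑ i ∈ A, μ i - ∑ i ∈ Aᶜ, μ i := by
  simp only [bundleGap, ite_mul, one_mul, neg_one_mul, sum_ite, sum_neg_distrib,
    filter_univ_mem, filter_notMem_eq_sdiff, compl_eq_univ_sdiff, sub_eq_add_neg]

theorem bundleGap_add (μ ν : ι → ℝ) (A : Finset ι) :
    bundleGap (μ + ν) A = bundleGap μ A + bundleGap ν A := by
  simp only [bundleGap, Pi.add_apply, mul_add, sum_add_distrib]

theorem bundleGap_sub (μ ν : ι → ℝ) (A : Finset ι) :
    bundleGap (μ - ν) A = bundleGap μ A - bundleGap ν A := by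
  simp only [bundleGap, Pi.sub_apply, mul_sub, sum_sub_distrib]

end SignedSums

section HardInstance

open Finset

variable {m : ℕ}

theorem envyAB_eq_neg_bundleGap (μ : Fin m → ℝ) (A : Finset (Fin m)) :
    envyAB μ A = -bundleGap μ A := by
  rw [bundleGap_eq_sum_sub_sum_compl, neg_sub, envyAB]

theorem envyBA_eq_bundleGap (μ : Fin m → ℝ) (A : Finset (Fin m)) :
    envyBA μ A = bundleGap μ A := by
  rw [bundleGap_eq_sum_sub_sum_compl, envyBA]

theorem envy_add_sub (μ δ : Fin m → ℝ) (A : Finset (Fin m)) :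
    envy (μ + δ) (μ - δ) A = |bundleGap μ A| - bundleGap δ A :=
  calc
    envy (μ + δ) (μ - δ) A
      = max (-bundleGap μ A - bundleGap δ A) (bundleGap μ A - bundleGap δ A) := by
        rw [envy, envyAB_eq_neg_bundleGap, envyBA_eq_bundleGap, bundleGap_add, bundleGap_sub,
          neg_add']
    _ = |bundleGap μ A| - bundleGap δ A := by
        rw [max_sub_sub_right, max_comm, ← abs_eq_max_neg]

/-- The common part `(μ^a + μ^b) / 2` of the two utilities of the hard instance. -/
def hardCommon (m : ℕ) (γ : ℝ) (X : Fin m → Bool) (i : Fin m) : ℝ :=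
  if (i : ℕ) < m / 2 then 1 / 2 else (if X i then 1 / 2 + γ else 1 / 2 - γ)

/-- The half-difference `(μ^a - μ^b) / 2` of the two utilities of the hard instance. -/
def hardTilt (m : ℕ) (ε : ℝ) (X : Fin m → Bool) (i : Fin m) : ℝ :=
  if (i : ℕ) < m / 2 then (if X i then ε else -ε) else 0

/-- The Hamming distance `d_H` on the first half of the coordinates between `X` and the indicator
of `A`. -/
def firstHalfDist (X : Fin m → Bool) (A : Finset (Fin m)) : ℕ :=
  #{i : Fin m | (i : ℕ) < m / 2 ∧ ¬(X i = true ↔ i ∈ A)}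

theorem hardμa_eq_hardCommon_add_hardTilt (ε γ : ℝ) (X : Fin m → Bool) :
    hardμa m ε γ X = hardCommon m γ X + hardTilt m ε X := by
  funext i
  simp only [hardμa, hardCommon, hardTilt, Pi.add_apply]
  split_ifs <;> ring

theorem hardμb_eq_hardCommon_sub_hardTilt (ε γ : ℝ) (X : Fin m → Bool) :
    hardμb m ε γ X = hardCommon m γ X - hardTilt m ε X := by
  funext i
  simp only [hardμb, hardCommon, hardTilt, Pi.sub_apply]
  split_ifs <;> ring

theorem bundleGap_hardTilt (ε : ℝ) (X : Fin m → Bool) (A : Finset (Fin m)) :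
    bundleGap (hardTilt m ε X) A = ε * ((m / 2 : ℕ) - 2 * firstHalfDist X A) := by
  have sign_mul_hardTilt (i : Fin m) :
      (if i ∈ A then 1 else -1) * hardTilt m ε X i =
        if (i : ℕ) < m / 2 then ε * (if X i = true ↔ i ∈ A then 1 else -1) else 0 := by
    by_cases hX : X i = true <;> by_cases hA : i ∈ A <;> simp [hardTilt, hX, hA]
  calc
    bundleGap (hardTilt m ε X) A
      = ε * ∑ i ∈ {i : Fin m | (i : ℕ) < m / 2}, if X i = true ↔ i ∈ A then 1 else -1 := by
        rw [bundleGap, mul_sum, sum_filter]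
        exact sum_congr rfl fun i _ ↦ sign_mul_hardTilt i
    _ = ε * ((m / 2 : ℕ) - 2 * firstHalfDist X A) := by
        rw [sum_ite_one_neg_one_eq_card_sub, Fin.card_filter_val_lt,
          min_eq_right (Nat.div_le_self m 2), filter_filter, firstHalfDist]

theorem bundleGap_hardCommon (ε γ : ℝ) (X : Fin m → Bool) (A : Finset (Fin m)) :
    bundleGap (hardCommon m γ X) A =
      (1 / 2) * ((#{i : Fin m | (i : ℕ) < m / 2 ∧ i ∈ A} : ℝ) -
          #{i : Fin m | (i : ℕ) < m / 2 ∧ i ∉ A}) +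
        ∑ i ∈ {i : Fin m | m / 2 ≤ (i : ℕ)}, (if i ∈ A then 1 else -1) * hardμa m ε γ X i := by
  rw [bundleGap, ← sum_filter_add_sum_filter_not univ fun i : Fin m ↦ (i : ℕ) < m / 2]
  simp only [not_lt]
  congr 1
  · rw [← filter_filter, ← filter_filter, ← sum_ite_one_neg_one, mul_sum]
    refine sum_congr rfl fun i hi ↦ ?_
    rw [hardCommon, if_pos (mem_filter_univ i |>.mp hi), mul_comm]
  · refine sum_congr rfl fun i hi ↦ ?_
    have second_half : ¬(i : ℕ) < m / 2 := not_lt.mpr (mem_filter_univ i |>.mp hi)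
    rw [hardCommon, hardμa, if_neg second_half, if_neg second_half]

theorem envy_hardμa_hardμb (ε γ : ℝ) (X : Fin m → Bool) (A : Finset (Fin m)) :
    envy (hardμa m ε γ X) (hardμb m ε γ X) A =
      |bundleGap (hardCommon m γ X) A| - ε * ((m / 2 : ℕ) - 2 * firstHalfDist X A) := by
  rw [hardμa_eq_hardCommon_add_hardTilt, hardμb_eq_hardCommon_sub_hardTilt, envy_add_sub,
    bundleGap_hardTilt]

theorem stmt19_general {ε : ℝ} (hε : 0 < ε) (γ : ℝ) (X : Fin m → Bool) (A : Finset (Fin m))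
    {t : ℝ} (h_dist : (m : ℝ) / 4 - t / (2 * ε) < firstHalfDist X A)
    (h_gap : t ≤ |bundleGap (hardCommon m γ X) A|) :
    0 < envy (hardμa m ε γ X) (hardμb m ε γ X) A := by
  have tilt_lt : ε * ((m / 2 : ℕ) - 2 * firstHalfDist X A) < t :=
    calc
      ε * ((m / 2 : ℕ) - 2 * firstHalfDist X A) ≤ ε * ((m : ℝ) / 2 - 2 * firstHalfDist X A) := by
        gcongr
        exact Nat.cast_div_le
      _ = 2 * ε * (m / 4 - firstHalfDist X A) := by ring
      _ < 2 * ε * (t / (2 * ε)) := by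
        gcongr
        linarith
      _ = t := mul_div_cancel₀ t (by positivity)
  rw [envy_hardμa_hardμb]
  linarith

end HardInstance

/-- for the hard instance, if for some constant `K > 0` the allocation
`Â` (given as the set `A` of items of agent a, so `X̂_i = 1 ↔ i ∈ A`) satisfies
`d_H(X_{[1:m/2]}, X̂_{[1:m/2]}) > m/4 − Kγ√m/(2ε)` and
`|(1/2)(|Â_ε| − |B̂_ε|) + V_γ| ≥ Kγ√m`, then `Envy(Â) > 0`.  Here
`Â_ε = {i < m/2 : i ∈ A}`, `B̂_ε = {i < m/2 : i ∉ A}`, `S_i = ±1` according to whether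
`i ∈ A`, and `V_γ = ∑_{i ≥ m/2} S_i μ^a_i`. -/
theorem stmt19 (m : ℕ) (hm : 2 ∣ m) (ε γ : ℝ)
    (hε : ε ∈ Set.Ioc (0 : ℝ) (1 / 2)) (hγ : γ ∈ Set.Ioc (0 : ℝ) (1 / 2))
    (X : Fin m → Bool) (A : Finset (Fin m)) (K : ℝ) (hK : 0 < K)
    (h1 : (m : ℝ) / 4 - K * γ * Real.sqrt m / (2 * ε) <
      ((Finset.univ.filter fun i : Fin m =>
          (i : ℕ) < m / 2 ∧ ¬(X i = true ↔ i ∈ A)).card : ℝ))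
    (h2 : K * γ * Real.sqrt m ≤
      |(1 / 2) * (((Finset.univ.filter fun i : Fin m => (i : ℕ) < m / 2 ∧ i ∈ A).card : ℝ) -
            ((Finset.univ.filter fun i : Fin m => (i : ℕ) < m / 2 ∧ i ∉ A).card : ℝ)) +
          ∑ i ∈ Finset.univ.filter (fun i : Fin m => m / 2 ≤ (i : ℕ)),
            (if i ∈ A then (1 : ℝ) else -1) * hardμa m ε γ X i|) :
    0 < envy (hardμa m ε γ X) (hardμb m ε γ X) A := by
  rw [← bundleGap_hardCommon] at h2
  exact stmt19_general hε.1 γ X A h1 h2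
end
end
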